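/- Let Σ be a symmetric positive definite d×d matrix with λ I ⪯ Σ ⪯ Λ I for 0 < λ ≤ Λ, and set μ = √(λΛ). For each m ≥ 1, with a_j^{(m)} = (2/(2m+1))sin²(jπ/(2m+1)) and b_j^{(m)} = cos²(jπ/(2m+1)), the Padé approximation error E_m := Σ^{1/2} - √μ[I + Σ_{j=1}^m (I + b_j^{(m)}(Σ - μI)/μ)^{-1} · a_j^{(m)}(Σ - μI)/μ] satisfies ||E_m||_op ≤ 2·max{√Λ·(1 + 2/κ^{1/4})^{-(2m+1)}, √λ·((1 + 2/κ^{1/4})^{2m+1} - 1)^{-1}}, where κ = Λ/λ. -/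

import Mathlib

/-!
All the matrices involved are diagonal in an orthonormal eigenbasis of `S`, so the operator norm of
the error is the largest scalar error at an eigenvalue `t` of `S`, where `λ ≤ t² ≤ Λ`
(`opNorm_conj_diagonal_le`, `nonneg_of_posSemidef_conj`). After dividing by `√μ`, with `x = t / √μ`
and `k = κ^{1/4}`, one has `k⁻¹ ≤ x ≤ k` and it remains to study the approximant of `x = √(x²)`.

Put `n = 2m + 1` and `r = (1 - x) / (1 + x)`. The approximant has the closed form
`x (1 + rⁿ) / (1 - rⁿ)` (`pade_identity`): up to the reflection `j ↦ n - j`, its partial fractions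
are values of the Poisson kernel of radius `r` at the angles `2πj/n`, and the sum of the kernel over
the `n`-th roots of unity is a geometric-series computation (`poisson_sum`). Hence the error is
`-2 x rⁿ / (1 - rⁿ)`. For `x ≥ 1` the power `rⁿ` is nonpositive and `|r| ≤ (1 + 2/k)⁻¹`, giving the
first term of the maximum. For `x < 1` one has `r⁻¹ ≥ 1 + 2x`, and `x / ((1 + 2x)ⁿ - 1)` is
decreasing in `x`, so `x = k⁻¹` is the worst case and gives the second term (`scalar_bound`).
-/

open Matrix Real

/-- The `ℓ²` operator (spectral) norm of a real square matrix. -/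
noncomputable def opNorm {d : ℕ} (M : Matrix (Fin d) (Fin d) ℝ) : ℝ :=
  ‖(Matrix.toEuclideanCLM (𝕜 := ℝ) (n := Fin d)) M‖

/-- The average of `1 / (1 - r z)` over the `n`-th roots of unity `z` is `1 / (1 - rⁿ)`: expand each
term as `(∑_{k<n} (r z)ᵏ) / (1 - rⁿ)` and use that only the `k = 0` power sum survives. -/
lemma sum_inv_one_sub (n : ℕ) (hn : n ≠ 0) (ζ r : ℂ) (hζ : IsPrimitiveRoot ζ n)
    (hr : r ^ n ≠ 1) :
    ∑ j ∈ Finset.range n, (1 - r * ζ ^ j)⁻¹ = n / (1 - r ^ n) := by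
  have h1 : 1 - r ^ n ≠ 0 := sub_ne_zero.mpr (Ne.symm hr)
  have key : ∀ j, (1 - r * ζ ^ j)⁻¹ =
      (∑ k ∈ Finset.range n, r ^ k * (ζ ^ k) ^ j) / (1 - r ^ n) := by
    intro j
    have hp : (r * ζ ^ j) ^ n = r ^ n := by
      rw [mul_pow, ← pow_mul, mul_comm j n, pow_mul, hζ.pow_eq_one, one_pow, mul_one]
    have hg := mul_neg_geom_sum (r * ζ ^ j) n
    rw [hp] at hg
    have h2 : 1 - r * ζ ^ j ≠ 0 := by
      intro h; rw [h, zero_mul] at hg; exact h1 hg.symm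
    rw [inv_eq_one_div, div_eq_div_iff h2 h1, one_mul, ← hg, mul_comm]
    congr 1
    refine Finset.sum_congr rfl fun k _ => ?_
    rw [mul_pow, ← pow_mul, ← pow_mul, mul_comm]
    ring
  simp_rw [key]
  rw [← Finset.sum_div, Finset.sum_comm]
  congr 1
  rw [Finset.sum_eq_single_of_mem 0 (Finset.mem_range.mpr (Nat.pos_of_ne_zero hn))]
  · simp
  · intro k hk hk0
    rw [← Finset.mul_sum]
    have hne : ζ ^ k ≠ 1 := hζ.pow_ne_one_of_pos_of_lt hk0 (Finset.mem_range.mp hk)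
    have := mul_neg_geom_sum (ζ ^ k) n
    rw [← pow_mul, mul_comm k n, pow_mul, hζ.pow_eq_one, one_pow, sub_self] at this
    rcases mul_eq_zero.mp this with h | h
    · exact absurd (sub_eq_zero.mp h).symm hne
    · rw [h, mul_zero]

/-- Sum of the Poisson kernel over the `n`-th roots of unity, from `sum_inv_one_sub` and the identity
`P_r(φ) = 2 Re (1 - r e^{iφ})⁻¹ - 1`. -/
lemma poisson_sum (n : ℕ) (hn : n ≠ 0) (r : ℝ) (hr : |r| < 1) :
    ∑ j ∈ Finset.range n, (1 - r ^ 2) / (1 - 2 * r * cos (2 * (j * π / n)) + r ^ 2)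
      = n * (1 + r ^ n) / (1 - r ^ n) := by
  set ζ : ℂ := Complex.exp (2 * π * Complex.I / n) with hζd
  have hζ : IsPrimitiveRoot ζ n := Complex.isPrimitiveRoot_exp n hn
  have hrn : |r ^ n| < 1 := by
    rw [abs_pow]; exact pow_lt_one₀ (abs_nonneg r) hr hn
  have hrn1 : 1 - r ^ n ≠ 0 := by have := (abs_lt.mp hrn).2; linarith
  have hs := sum_inv_one_sub n hn ζ r hζ (by
    intro h
    have : r ^ n = 1 := by exact_mod_cast h
    rw [this] at hrn; simp at hrn)
  have hs' : ∑ j ∈ Finset.range n, ((1 - (r:ℂ) * ζ ^ j)⁻¹).re = n / (1 - r ^ n) := by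
    have := congrArg Complex.re hs
    rw [Complex.re_sum] at this
    rw [this]
    have : (n : ℂ) / (1 - (r:ℂ) ^ n) = ((n / (1 - r ^ n) : ℝ) : ℂ) := by push_cast; rfl
    rw [this, Complex.ofReal_re]
  have hterm : ∀ j ∈ Finset.range n,
      (1 - r ^ 2) / (1 - 2 * r * cos (2 * (j * π / n)) + r ^ 2)
        = 2 * ((1 - (r:ℂ) * ζ ^ j)⁻¹).re - 1 := by
    intro j _
    have hz : ζ ^ j = Complex.exp ((2 * (j * π / n) : ℝ) * Complex.I) := by
      rw [hζd, ← Complex.exp_nat_mul]; congr 1; push_cast; ring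
    rw [hz, Complex.exp_mul_I, ← Complex.ofReal_cos, ← Complex.ofReal_sin]
    set φ := 2 * (j * π / n)
    have hsc := sin_sq_add_cos_sq φ
    have hD : 0 < 1 - 2 * r * cos φ + r ^ 2 := by
      have h1 : |r * cos φ| ≤ |r| := by
        rw [abs_mul]; exact mul_le_of_le_one_right (abs_nonneg r) (abs_cos_le_one φ)
      have h2 := (abs_le.mp h1).2
      nlinarith [sq_abs r, abs_nonneg r]
    rw [Complex.inv_re, Complex.normSq_apply]
    have e : ∀ c s : ℝ, (1 - (r:ℂ) * (c + s * Complex.I)).re = 1 - r * c ∧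
        (1 - (r:ℂ) * (c + s * Complex.I)).im = - (r * s) := by
      intro c s; simp
    rw [(e _ _).1, (e _ _).2]
    have hD2 : (1 - r * cos φ) * (1 - r * cos φ) + -(r * sin φ) * -(r * sin φ)
        = 1 - 2 * r * cos φ + r ^ 2 := by linear_combination r ^ 2 * hsc
    rw [hD2, div_eq_iff hD.ne', sub_mul, mul_assoc, div_mul_cancel₀ _ hD.ne']
    ring
  rw [Finset.sum_congr rfl hterm, Finset.sum_sub_distrib, ← Finset.mul_sum, hs']
  simp
  field_simp
  ring

/-- Closed form of the partial-fraction approximant of `√(x²)`. -/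
lemma pade_identity (m : ℕ) (x : ℝ) (hx : 0 < x) :
    1 + ∑ j ∈ Finset.Icc 1 m, (1 + cos ((j:ℝ) * π / (2 * m + 1)) ^ 2 * (x ^ 2 - 1))⁻¹ *
        (2 / (2 * (m:ℝ) + 1) * sin ((j:ℝ) * π / (2 * m + 1)) ^ 2 * (x ^ 2 - 1))
      = x * ((1 + ((1 - x) / (1 + x)) ^ (2 * m + 1)) / (1 - ((1 - x) / (1 + x)) ^ (2 * m + 1))) := by
  set n := 2 * m + 1 with hn
  have hnc : (2 * (m:ℝ) + 1) = n := by rw [hn]; push_cast; ring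
  have hn0 : (n:ℝ) ≠ 0 := by rw [← hnc]; positivity
  rw [hnc]
  set r := (1 - x) / (1 + x) with hr
  have hr1 : |r| < 1 := by
    rw [hr, abs_div, div_lt_one (by positivity), abs_of_pos (by positivity : 0 < 1 + x), abs_lt]
    constructor <;> linarith
  have hP := poisson_sum n (by omega) r hr1
  set f : ℕ → ℝ := fun j => (1 + cos ((j:ℝ) * π / n) ^ 2 * (x ^ 2 - 1))⁻¹ *
        (sin ((j:ℝ) * π / n) ^ 2 * (x ^ 2 - 1)) with hf
  have hden : ∀ θ : ℝ, 0 < 1 + cos θ ^ 2 * (x ^ 2 - 1) := by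
    intro θ
    have h : 1 + cos θ ^ 2 * (x ^ 2 - 1) = sin θ ^ 2 + cos θ ^ 2 * x ^ 2 := by
      linear_combination - sin_sq_add_cos_sq θ
    rw [h]
    by_cases hc : cos θ = 0
    · have := sin_sq_add_cos_sq θ
      rw [hc] at this ⊢; nlinarith
    · positivity
  -- The Poisson kernel of radius `r` at angle `2θ` equals `x / (sin² θ + x² cos² θ)`.
  have hterm : ∀ j : ℕ, (1 - r ^ 2) / (1 - 2 * r * cos (2 * (j * π / n)) + r ^ 2)
      = (1 + f j) / x := by
    intro j
    simp only [hf]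
    set θ := (j:ℝ) * π / n
    have h := hden θ
    rw [cos_two_mul, sin_sq]
    have hD : 1 - 2 * r * (2 * cos θ ^ 2 - 1) + r ^ 2
        = 4 * (1 + cos θ ^ 2 * (x ^ 2 - 1)) / (1 + x) ^ 2 := by
      rw [hr]; field_simp; ring
    rw [hD, hr]
    field_simp
    ring
  -- `f 0 = 0`, and `f` is symmetric under `j ↦ n - j`.
  have hsum : ∑ j ∈ Finset.range n, f j = 2 * ∑ j ∈ Finset.Icc 1 m, f j := by
    have hrefl : ∀ j ∈ Finset.Icc 1 m, f (n - j) = f j := by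
      intro j hj
      have hjn : j ≤ n := by have := (Finset.mem_Icc.mp hj).2; omega
      have : ((n - j : ℕ) : ℝ) * π / n = π - j * π / n := by
        rw [Nat.cast_sub hjn]; field_simp
      simp only [hf, this, cos_pi_sub, sin_pi_sub, neg_sq]
    have hbij : ∑ j ∈ Finset.Icc 1 m, f (n - j) = ∑ j ∈ Finset.Icc (m + 1) (2 * m), f j := by
      refine Finset.sum_nbij' (fun j => n - j) (fun j => n - j) ?_ ?_ ?_ ?_ ?_ <;>
        intro j hj <;> simp only [Finset.mem_Icc] at * <;> omega
    have hsplit : Finset.range n = insert 0 (Finset.Icc 1 m ∪ Finset.Icc (m + 1) (2 * m)) := by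
      ext j; simp only [Finset.mem_range, Finset.mem_insert, Finset.mem_union, Finset.mem_Icc]
      omega
    rw [hsplit, Finset.sum_insert (by simp), Finset.sum_union, ← hbij,
      Finset.sum_congr rfl hrefl]
    · have : f 0 = 0 := by simp [hf]
      rw [this]; ring
    · rw [Finset.disjoint_left]; intro j; simp only [Finset.mem_Icc]; omega
  rw [Finset.sum_congr rfl (fun j _ => hterm j), ← Finset.sum_div, Finset.sum_add_distrib,
    hsum, Finset.sum_const, Finset.card_range, nsmul_eq_mul, mul_one] at hP
  have hL : ∑ j ∈ Finset.Icc 1 m, (1 + cos ((j:ℝ) * π / n) ^ 2 * (x ^ 2 - 1))⁻¹ *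
        (2 / (n:ℝ) * sin ((j:ℝ) * π / n) ^ 2 * (x ^ 2 - 1))
      = 2 / (n:ℝ) * ∑ j ∈ Finset.Icc 1 m, f j := by
    rw [Finset.mul_sum]; refine Finset.sum_congr rfl fun j _ => ?_
    simp only [hf]; ring
  rw [hL]
  rw [div_eq_iff hx.ne', mul_div_assoc] at hP
  have : (n:ℝ) * (1 + 2 / n * ∑ j ∈ Finset.Icc 1 m, f j) = n * (x * ((1 + r ^ n) / (1 - r ^ n))) := by
    rw [mul_add, ← mul_assoc, mul_div_cancel₀ _ hn0]
    linarith
  exact mul_left_cancel₀ hn0 this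

/-- The error bound for `μ = 1`, with `k` in the role of `κ^{1/4}` and the approximant in closed form. -/
lemma scalar_bound (m : ℕ) (x k : ℝ) (hk : 1 ≤ k) (hx1 : k⁻¹ ≤ x) (hx2 : x ≤ k) :
    |x - x * ((1 + ((1 - x) / (1 + x)) ^ (2 * m + 1)) / (1 - ((1 - x) / (1 + x)) ^ (2 * m + 1)))|
      ≤ 2 * max (k * ((1 + 2 / k) ^ (2 * m + 1))⁻¹) (k⁻¹ * ((1 + 2 / k) ^ (2 * m + 1) - 1)⁻¹) := by
  have hk0 : 0 < k := by linarith
  have hx : 0 < x := lt_of_lt_of_le (by positivity) hx1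
  set n := 2 * m + 1 with hn
  set r := (1 - x) / (1 + x) with hr
  have hr1 : |r| < 1 := by
    rw [hr, abs_div, div_lt_one (by positivity), abs_of_pos (by positivity : 0 < 1 + x), abs_lt]
    constructor <;> linarith
  have hrn : |r ^ n| < 1 := by
    rw [abs_pow]; exact pow_lt_one₀ (abs_nonneg r) hr1 (by omega)
  have hpos : 0 < 1 - r ^ n := by have := (abs_lt.mp hrn).2; linarith
  have herr : x - x * ((1 + r ^ n) / (1 - r ^ n)) = - (2 * (x * r ^ n / (1 - r ^ n))) := by
    field_simp; ring
  rw [herr, abs_neg, abs_mul, abs_two]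
  refine mul_le_mul_of_nonneg_left ?_ zero_le_two
  rw [abs_div, abs_mul, abs_of_pos hx, abs_of_pos hpos]
  rcases le_or_gt 1 x with h1 | h1
  -- For `x ≥ 1` the denominator `1 - rⁿ` is at least `1`, since `n` is odd and `r ≤ 0`.
  · refine le_max_of_le_left ?_
    have hrle : r ≤ 0 := by
      rw [hr]; exact div_nonpos_of_nonpos_of_nonneg (by linarith) (by linarith)
    have hodd : Odd n := ⟨m, hn⟩
    have hpn : r ^ n ≤ 0 := hodd.pow_nonpos hrle
    have hra : |r| ≤ (1 + 2 / k)⁻¹ := by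
      rw [abs_of_nonpos hrle, hr, ← neg_div, div_le_iff₀ (by positivity)]
      have : (1 + 2 / k)⁻¹ = k / (k + 2) := by field_simp
      rw [this, div_mul_eq_mul_div, le_div_iff₀ (by positivity)]
      nlinarith
    calc x * |r ^ n| / (1 - r ^ n) ≤ x * |r ^ n| := div_le_self (by positivity) (by linarith)
      _ ≤ k * ((1 + 2 / k) ^ n)⁻¹ := by
        rw [abs_pow, ← inv_pow]
        gcongr
  · refine le_max_of_le_right ?_
    have hr0 : 0 < r := by rw [hr]; exact div_pos (by linarith) (by linarith)
    have hrinv : 1 + 2 * x ≤ r⁻¹ := by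
      rw [hr, inv_div, le_div_iff₀ (by linarith)]
      nlinarith
    have hA : x * |r ^ n| / (1 - r ^ n) = x * (r⁻¹ ^ n - 1)⁻¹ := by
      rw [abs_of_pos (by positivity), inv_pow]
      have : (r ^ n)⁻¹ - 1 = (1 - r ^ n) / r ^ n := by field_simp
      rw [this, inv_div, mul_div_assoc]
    -- This factorization shows that `((1 + 2y)ⁿ - 1) / y` is increasing in `y > 0`.
    have hgeo : ∀ y : ℝ, (1 + 2 * y) ^ n - 1 = y * (2 * ∑ i ∈ Finset.range n, (1 + 2 * y) ^ i) := by
      intro y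
      rw [← mul_geom_sum]; ring
    have hG : ∀ y : ℝ, 0 < y → 0 < ∑ i ∈ Finset.range n, (1 + 2 * y) ^ i := by
      intro y hy
      exact Finset.sum_pos (fun i _ => by positivity) ⟨0, by simp [hn]⟩
    have hB : ∀ y : ℝ, 0 < y →
        y * ((1 + 2 * y) ^ n - 1)⁻¹ = (2 * ∑ i ∈ Finset.range n, (1 + 2 * y) ^ i)⁻¹ := by
      intro y hy
      rw [hgeo, mul_inv, ← mul_assoc, mul_inv_cancel₀ hy.ne', one_mul]
    have hki : 0 < k⁻¹ := by positivity
    rw [hA]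
    calc x * (r⁻¹ ^ n - 1)⁻¹ ≤ x * ((1 + 2 * x) ^ n - 1)⁻¹ := by
          have : 0 < (1 + 2 * x) ^ n - 1 := by
            rw [hgeo]; have := hG x hx; positivity
          gcongr
      _ = (2 * ∑ i ∈ Finset.range n, (1 + 2 * x) ^ i)⁻¹ := hB x hx
      _ ≤ (2 * ∑ i ∈ Finset.range n, (1 + 2 * k⁻¹) ^ i)⁻¹ := by
          have := hG k⁻¹ hki
          gcongr
      _ = k⁻¹ * ((1 + 2 / k) ^ n - 1)⁻¹ := by rw [← hB _ hki, div_eq_mul_inv]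

/-- The error bound at a single eigenvalue `t`, by rescaling `scalar_bound` with `t = √μ x`; the
endpoints become `√Λ = √μ k` and `√λ = √μ k⁻¹`. -/
lemma scaled_bound (lam Lam : ℝ) (hlam : 0 < lam) (hlamLam : lam ≤ Lam) (m : ℕ) (t : ℝ)
    (ht : 0 < t) (h1 : lam ≤ t ^ 2) (h2 : t ^ 2 ≤ Lam) :
    |t - √(√(lam * Lam)) * (1 + ∑ j ∈ Finset.Icc 1 m,
        (1 + cos ((j : ℝ) * π / (2 * m + 1)) ^ 2 / √(lam * Lam) * (t ^ 2 - √(lam * Lam)))⁻¹ *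
        (2 / (2 * (m : ℝ) + 1) * sin ((j : ℝ) * π / (2 * m + 1)) ^ 2 / √(lam * Lam) *
          (t ^ 2 - √(lam * Lam))))| ≤
      2 * max (√Lam * ((1 + 2 / (Lam / lam) ^ ((1 : ℝ) / 4)) ^ (2 * m + 1))⁻¹)
        (√lam * ((1 + 2 / (Lam / lam) ^ ((1 : ℝ) / 4)) ^ (2 * m + 1) - 1)⁻¹) := by
  have hLam : 0 < Lam := by linarith
  have hκ : 1 ≤ Lam / lam := (one_le_div hlam).mpr hlamLam
  set k := (Lam / lam) ^ ((1 : ℝ) / 4) with hkd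
  have hk : 1 ≤ k := one_le_rpow hκ (by norm_num)
  have hk0 : 0 < k := by linarith
  have hk2 : k ^ 2 = √(Lam / lam) := by
    rw [hkd, sqrt_eq_rpow, ← rpow_natCast, ← rpow_mul (by positivity)]; norm_num
  set q := √(lam * Lam) with hqd
  have hq : 0 < q := sqrt_pos.mpr (by positivity)
  have hqL : q * k ^ 2 = Lam := by
    rw [hk2, hqd, ← sqrt_mul (by positivity),
      show lam * Lam * (Lam / lam) = Lam ^ 2 by field_simp, sqrt_sq hLam.le]
  have hql : lam * k ^ 2 = q := by
    have hq2 : q * q = lam * Lam := mul_self_sqrt (by positivity)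
    have : q * (lam * k ^ 2) = q * q := by rw [hq2, ← hqL]; ring
    exact mul_left_cancel₀ hq.ne' this
  have hsq : 0 < √q := sqrt_pos.mpr hq
  have hsL : √Lam = √q * k := by
    rw [← hqL, sqrt_mul hq.le, sqrt_sq hk0.le]
  have hsl : √lam = √q * k⁻¹ := by
    rw [← hql, sqrt_mul hlam.le, sqrt_sq hk0.le]; field_simp
  set x := t / √q with hxd
  have hx : 0 < x := by positivity
  have htx : t = √q * x := by rw [hxd]; field_simp
  have ht2 : t ^ 2 = q * x ^ 2 := by rw [htx, mul_pow, sq_sqrt hq.le]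
  have hx1 : k⁻¹ ≤ x := by
    rw [hxd, le_div_iff₀ hsq, mul_comm, ← hsl]
    exact (sqrt_le_left ht.le).mpr h1
  have hx2 : x ≤ k := by
    rw [hxd, div_le_iff₀ hsq, mul_comm, ← hsL]
    exact le_sqrt_of_sq_le h2
  have hb := scalar_bound m x k hk hx1 hx2
  rw [← pade_identity m x hx] at hb
  have hz : ∀ c : ℝ, c / q * (t ^ 2 - q) = c * (x ^ 2 - 1) := by
    intro c; rw [ht2]; field_simp
  simp only [hz]
  rw [htx, ← mul_sub, abs_mul, abs_of_pos hsq, hsL, hsl, mul_assoc (√q), mul_assoc (√q),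
    ← mul_max_of_nonneg _ _ hsq.le, mul_left_comm]
  exact mul_le_mul_of_nonneg_left hb hsq.le

open scoped Matrix.Norms.L2Operator in
lemma opNorm_conj_diagonal_le {d : ℕ} (U : unitary (Matrix (Fin d) (Fin d) ℝ)) (f : Fin d → ℝ)
    (C : ℝ) (hC : 0 ≤ C) (hf : ∀ i, |f i| ≤ C) :
    opNorm (Unitary.conjStarAlgAut ℝ _ U (diagonal f)) ≤ C := by
  unfold opNorm
  rw [Matrix.l2_opNorm_toEuclideanCLM, Unitary.conjStarAlgAut_apply, ← Unitary.coe_star,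
    CStarRing.norm_mul_coe_unitary,
    CStarRing.norm_coe_unitary_mul, Matrix.l2_opNorm_diagonal]
  exact (pi_norm_le_iff_of_nonneg hC).mpr hf

lemma nonneg_of_posSemidef_conj {d : ℕ} (U : unitary (Matrix (Fin d) (Fin d) ℝ)) (f : Fin d → ℝ)
    (h : (Unitary.conjStarAlgAut ℝ _ U (diagonal f)).PosSemidef) (i : Fin d) : 0 ≤ f i := by
  have h2 := h.conjTranspose_mul_mul_same (U : Matrix (Fin d) (Fin d) ℝ)
  have h3 : (U : Matrix (Fin d) (Fin d) ℝ)ᴴ * (Unitary.conjStarAlgAut ℝ _ U (diagonal f)) * U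
      = diagonal f := by
    rw [← star_eq_conjTranspose, ← Unitary.conjStarAlgAut_symm_apply (S := ℝ)]
    exact StarAlgEquiv.symm_apply_apply _ _
  rw [h3] at h2
  simpa using h2.diag_nonneg (i := i)


/-- Padé approximation of the matrix square root: quantitative error bound.
Here `S` is the symmetric positive definite square root of `Σ`, `λ I ⪯ Σ ⪯ Λ I`,
`μ = √(λΛ)`, `κ = Λ/λ`, and the coefficients are
`aⱼ = (2/(2m+1)) sin²(jπ/(2m+1))`, `bⱼ = cos²(jπ/(2m+1))`. -/
theorem pade_sqrt_error_bound {d : ℕ} (Sig S : Matrix (Fin d) (Fin d) ℝ)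
    (lam Lam : ℝ) (hlam : 0 < lam) (hlamLam : lam ≤ Lam)
    (hSig : Sig.IsSymm) (hSigPD : Sig.PosDef)
    (hlow : (Sig - lam • (1 : Matrix (Fin d) (Fin d) ℝ)).PosSemidef)
    (hhigh : (Lam • (1 : Matrix (Fin d) (Fin d) ℝ) - Sig).PosSemidef)
    (hS : S * S = Sig) (hSsymm : S.IsSymm) (hSPD : S.PosDef)
    (m : ℕ) (hm : 1 ≤ m) :
    opNorm (S - Real.sqrt (Real.sqrt (lam * Lam)) •
        ((1 : Matrix (Fin d) (Fin d) ℝ) + ∑ j ∈ Finset.Icc 1 m,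
          ((1 : Matrix (Fin d) (Fin d) ℝ) +
              ((Real.cos ((j : ℝ) * π / (2 * m + 1)) ^ 2) / Real.sqrt (lam * Lam)) •
                (Sig - Real.sqrt (lam * Lam) • (1 : Matrix (Fin d) (Fin d) ℝ)))⁻¹ *
            (((2 / (2 * (m : ℝ) + 1)) * Real.sin ((j : ℝ) * π / (2 * m + 1)) ^ 2 /
                Real.sqrt (lam * Lam)) •
              (Sig - Real.sqrt (lam * Lam) • (1 : Matrix (Fin d) (Fin d) ℝ))))) ≤
      2 * max (Real.sqrt Lam * ((1 + 2 / (Lam / lam) ^ ((1 : ℝ) / 4)) ^ (2 * m + 1))⁻¹)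
        (Real.sqrt lam * ((1 + 2 / (Lam / lam) ^ ((1 : ℝ) / 4)) ^ (2 * m + 1) - 1)⁻¹) := by
  have hH : S.IsHermitian := hSPD.isHermitian
  set Φ := Unitary.conjStarAlgAut ℝ (Matrix (Fin d) (Fin d) ℝ) hH.eigenvectorUnitary with hΦ
  set e := hH.eigenvalues with he
  have hSe : S = Φ (diagonal e) := hH.spectral_theorem
  have hpos : ∀ i, 0 < e i := fun i => hSPD.eigenvalues_pos i
  set q := √(lam * Lam) with hq
  have hq0 : 0 < q := sqrt_pos.mpr (mul_pos hlam (hlam.trans_le hlamLam))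
  -- `f ↦ Φ (diagonal f)` respects all the operations that build the approximant.
  have hΦ1 : Φ (diagonal fun _ => 1) = 1 := by rw [diagonal_one, map_one]
  have hsub : ∀ f g : Fin d → ℝ,
      Φ (diagonal f) - Φ (diagonal g) = Φ (diagonal fun i => f i - g i) := fun f g => by
    rw [← map_sub, diagonal_sub]
  have hadd : ∀ f g : Fin d → ℝ,
      Φ (diagonal f) + Φ (diagonal g) = Φ (diagonal fun i => f i + g i) := fun f g => by
    rw [← map_add, diagonal_add]
  have hmul : ∀ f g : Fin d → ℝ,
      Φ (diagonal f) * Φ (diagonal g) = Φ (diagonal fun i => f i * g i) := fun f g => by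
    rw [← map_mul, diagonal_mul_diagonal]
  have hsmul : ∀ (c : ℝ) (f : Fin d → ℝ),
      c • Φ (diagonal f) = Φ (diagonal fun i => c * f i) := fun c f => by
    rw [← map_smul, ← diagonal_smul]; rfl
  have hsum : ∀ F : ℕ → Fin d → ℝ, ∑ j ∈ Finset.Icc 1 m, Φ (diagonal (F j)) =
      Φ (diagonal fun i => ∑ j ∈ Finset.Icc 1 m, F j i) := fun F => by
    rw [← map_sum]; congr 1
    have := map_sum (diagonalAddMonoidHom (Fin d) ℝ) F (Finset.Icc 1 m)
    simp only [diagonalAddMonoidHom_apply] at this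
    rw [← this]; congr 1; ext i; simp
  have hinv : ∀ f : Fin d → ℝ, (∀ i, f i ≠ 0) →
      (Φ (diagonal f))⁻¹ = Φ (diagonal fun i => (f i)⁻¹) := fun f hf => by
    apply Matrix.inv_eq_right_inv
    rw [hmul, ← hΦ1]; congr 2; ext i; exact mul_inv_cancel₀ (hf i)
  have hSigΦ : Sig = Φ (diagonal fun i => e i ^ 2) := by
    rw [← hS, hSe, hmul]; simp only [sq]
  have hl : ∀ i, lam ≤ e i ^ 2 := by
    intro i
    rw [hSigΦ, ← hΦ1, hsmul, hsub] at hlow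
    have := nonneg_of_posSemidef_conj _ _ hlow i
    linarith
  have hh : ∀ i, e i ^ 2 ≤ Lam := by
    intro i
    rw [hSigΦ, ← hΦ1, hsmul, hsub] at hhigh
    have := nonneg_of_posSemidef_conj _ _ hhigh i
    linarith
  have hne : ∀ (j : ℕ) i,
      1 + cos ((j : ℝ) * π / (2 * m + 1)) ^ 2 / q * (e i ^ 2 - q * 1) ≠ 0 := by
    intro j i
    have : 1 + cos ((j : ℝ) * π / (2 * m + 1)) ^ 2 / q * (e i ^ 2 - q * 1)
        = sin ((j : ℝ) * π / (2 * m + 1)) ^ 2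
          + cos ((j : ℝ) * π / (2 * m + 1)) ^ 2 * (e i ^ 2 / q) := by
      rw [sin_sq]; field_simp; ring
    rw [this]
    have := hpos i
    by_cases hc : cos ((j : ℝ) * π / (2 * m + 1)) = 0
    · rw [sin_sq, hc]; norm_num
    · positivity
  have hterm : ∀ j ∈ Finset.Icc 1 m,
      (1 + (cos ((j : ℝ) * π / (2 * m + 1)) ^ 2 / q) • (Sig - q • 1))⁻¹ *
        ((2 / (2 * (m : ℝ) + 1) * sin ((j : ℝ) * π / (2 * m + 1)) ^ 2 / q) • (Sig - q • 1))
      = Φ (diagonal fun i =>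
        (1 + cos ((j : ℝ) * π / (2 * m + 1)) ^ 2 / q * (e i ^ 2 - q * 1))⁻¹ *
        (2 / (2 * (m : ℝ) + 1) * sin ((j : ℝ) * π / (2 * m + 1)) ^ 2 / q *
          (e i ^ 2 - q * 1))) := by
    intro j _
    rw [hSigΦ, ← hΦ1, hsmul, hsub, hsmul, hsmul, hadd, hinv _ (hne j), hmul]
  rw [Finset.sum_congr rfl hterm, hsum, ← hΦ1, hadd, hsmul, hSe, hsub]
  apply opNorm_conj_diagonal_le
  · have : 1 ≤ Lam / lam := (one_le_div hlam).mpr hlamLam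
    refine mul_nonneg zero_le_two (le_max_of_le_left ?_)
    positivity
  · intro i
    have := scaled_bound lam Lam hlam hlamLam m (e i) (hpos i) (hl i) (hh i)
    simpa only [mul_one] using this
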